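/- arXiv:math/0202043 — 3 statements merged into one kernel-verified Lean document; each statement's English description precedes it below -/
import Mathlib

section
/- Over any commutative ring with derivation ∂, the Wronskian V^{0,1,2,3}(u₁,u₂,u₃,u₄) = det(∂ⁱuⱼ)_{0≤i≤3, 1≤j≤4} satisfies the identity Q V^{0,1,2,3} = 3 V^{0,1,2}⌣V^{0,1,3,5} − 3 V^{0,1,3}⌣V^{0,1,2,5} + 3 V^{0,1,5}⌣V^{0,1,2,3}, where Q ψ(a₁,a₂,a₃,b₁,b₂,b₃,b₄) = ψ(a₁,a₂,a₃,ψ(b₁,…,b₄)) − Σ_{i=1}^4 ψ(b₁,…,ψ(a₁,a₂,a₃,bᵢ),…,b₄) and (f⌣g)(u₁,…,u₇) = f(u₁,u₂,u₃)g(u₄,…,u₇) for the generalized Wronskians V^{i₁,…,i_k}(u₁,…,u_k) = det(∂^{i_r}u_s). -/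
/-- The generalized Wronskian `V^{i₁,…,i_k}(u₁,…,u_k) = det(D^{i_r} u_s)`. -/
def gW {U : Type*} [CommRing U] (D : U → U) {k : ℕ} (idx : Fin k → ℕ)
    (u : Fin k → U) : U :=
  (Matrix.of fun r s : Fin k => D^[idx r] (u s)).det

theorem gW3_expand {U : Type*} [CommRing U] (D : U → U) (i j k : ℕ) (u : Fin 3 → U) :
    gW D ![i, j, k] u =
      D^[i] (u 0) * (D^[j] (u 1) * D^[k] (u 2) - D^[j] (u 2) * D^[k] (u 1))
      - D^[i] (u 1) * (D^[j] (u 0) * D^[k] (u 2) - D^[j] (u 2) * D^[k] (u 0))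
      + D^[i] (u 2) * (D^[j] (u 0) * D^[k] (u 1) - D^[j] (u 1) * D^[k] (u 0)) := by
  unfold gW
  rw [Matrix.det_fin_three]
  simp
  ring

/-- Expansion along the last column. -/
theorem gW4_expand {U : Type*} [CommRing U] (D : U → U) (i j k l : ℕ) (u : Fin 4 → U) :
    gW D ![i, j, k, l] u =
      gW D ![i, j, k] ![u 0, u 1, u 2] * D^[l] (u 3)
      - gW D ![i, j, l] ![u 0, u 1, u 2] * D^[k] (u 3)
      + gW D ![i, k, l] ![u 0, u 1, u 2] * D^[j] (u 3)
      - gW D ![j, k, l] ![u 0, u 1, u 2] * D^[i] (u 3) := by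
  simp only [gW3_expand]
  unfold gW
  simp [Matrix.det_succ_row_zero, Fin.sum_univ_succ, Fin.succAbove]
  ring

theorem D_gW3 {U : Type*} [CommRing U] (D : U → U)
    (hadd : ∀ a b : U, D (a + b) = D a + D b)
    (hleib : ∀ a b : U, D (a * b) = D a * b + a * D b) (i j k : ℕ) (u : Fin 3 → U) :
    D (gW D ![i, j, k] u) = gW D ![i+1, j, k] u + gW D ![i, j+1, k] u + gW D ![i, j, k+1] u := by
  have hsub : ∀ a b : U, D (a - b) = D a - D b := by
    intro a b
    have := hadd (a - b) b
    rw [sub_add_cancel] at this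
    rw [this]; ring
  simp only [gW3_expand, hadd, hsub, hleib, Function.iterate_succ_apply']
  ring

theorem D_gW4 {U : Type*} [CommRing U] (D : U → U)
    (hadd : ∀ a b : U, D (a + b) = D a + D b)
    (hleib : ∀ a b : U, D (a * b) = D a * b + a * D b) (i j k l : ℕ) (u : Fin 4 → U) :
    D (gW D ![i, j, k, l] u) = gW D ![i+1, j, k, l] u + gW D ![i, j+1, k, l] u
      + gW D ![i, j, k+1, l] u + gW D ![i, j, k, l+1] u := by
  have hsub : ∀ a b : U, D (a - b) = D a - D b := by
    intro a b
    have := hadd (a - b) b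
    rw [sub_add_cancel] at this
    rw [this]; ring
  simp only [gW4_expand, hadd, hsub, hleib, D_gW3 D hadd hleib, Function.iterate_succ_apply']
  ring

theorem gW3_eq12 {U : Type*} [CommRing U] (D : U → U) (i k : ℕ) (u : Fin 3 → U) :
    gW D ![i, i, k] u = 0 := by rw [gW3_expand]; ring
theorem gW3_eq23 {U : Type*} [CommRing U] (D : U → U) (i k : ℕ) (u : Fin 3 → U) :
    gW D ![i, k, k] u = 0 := by rw [gW3_expand]; ring
theorem gW4_eq12 {U : Type*} [CommRing U] (D : U → U) (i k l : ℕ) (u : Fin 4 → U) :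
    gW D ![i, i, k, l] u = 0 := by rw [gW4_expand]; simp only [gW3_eq12]; ring
theorem gW4_eq23 {U : Type*} [CommRing U] (D : U → U) (i k l : ℕ) (u : Fin 4 → U) :
    gW D ![i, k, k, l] u = 0 := by rw [gW4_expand]; simp only [gW3_eq12, gW3_eq23]; ring
theorem gW4_eq34 {U : Type*} [CommRing U] (D : U → U) (i k l : ℕ) (u : Fin 4 → U) :
    gW D ![i, k, l, l] u = 0 := by rw [gW4_expand]; simp only [gW3_eq23]; ring

/-- Replacing columns one at a time by `L b` where `L = A D³ - B D² + C D - E`. -/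
theorem col_sum {U : Type*} [CommRing U] (D : U → U)
    (hadd : ∀ a b : U, D (a + b) = D a + D b)
    (hleib : ∀ a b : U, D (a * b) = D a * b + a * D b) (A B C E : U) (b : Fin 4 → U) :
    ∑ i : Fin 4, gW D ![0, 1, 2, 3] (Function.update b i
      (A * D^[3] (b i) - B * D^[2] (b i) + C * D^[1] (b i) - E * D^[0] (b i)))
    = (-E + (D C - E) + (2 * D C - D (D B) - E) + (D (D (D A)) - 3 * D (D B) + 3 * D C - E))
        * gW D ![0, 1, 2, 3] b
      + (C - 3 * D B + 3 * D (D A)) * gW D ![0, 1, 2, 4] b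
      + (3 * D A - B) * gW D ![0, 1, 2, 5] b
      + A * gW D ![0, 1, 2, 6] b
      - (2 * D A - B) * gW D ![0, 1, 3, 4] b
      - A * gW D ![0, 1, 3, 5] b
      + A * gW D ![0, 2, 3, 4] b := by
  have hsub : ∀ a b : U, D (a - b) = D a - D b := by
    intro a b
    have := hadd (a - b) b
    rw [sub_add_cancel] at this
    rw [this]; ring
  simp only [Fin.sum_univ_four, gW4_expand, gW3_expand]
  simp [Function.update, hadd, hsub, hleib]
  ring

/-- Over any commutative ring with derivation `D`, the Wronskian `V^{0,1,2,3}`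
satisfies `Q V^{0,1,2,3} = 3 V^{0,1,2}⌣V^{0,1,3,5} − 3 V^{0,1,3}⌣V^{0,1,2,5}
+ 3 V^{0,1,5}⌣V^{0,1,2,3}`. -/
theorem stmt_9 (U : Type*) [CommRing U] (D : U → U)
    (hadd : ∀ a b : U, D (a + b) = D a + D b)
    (hleib : ∀ a b : U, D (a * b) = D a * b + a * D b) :
    ∀ (a : Fin 3 → U) (b : Fin 4 → U),
      gW D ![0, 1, 2, 3] (Fin.snoc a (gW D ![0, 1, 2, 3] b))
        - ∑ i : Fin 4, gW D ![0, 1, 2, 3]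
            (Function.update b i (gW D ![0, 1, 2, 3] (Fin.snoc a (b i))))
      = 3 * (gW D ![0, 1, 2] a * gW D ![0, 1, 3, 5] b)
        - 3 * (gW D ![0, 1, 3] a * gW D ![0, 1, 2, 5] b)
        + 3 * (gW D ![0, 1, 5] a * gW D ![0, 1, 2, 3] b) := by
  intro a b
  have hL : ∀ v : U, gW D ![0, 1, 2, 3] (Fin.snoc a v) =
      gW D ![0, 1, 2] a * D^[3] v - gW D ![0, 1, 3] a * D^[2] v
      + gW D ![0, 2, 3] a * D^[1] v - gW D ![1, 2, 3] a * D^[0] v := by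
    intro v
    rw [gW4_expand]
    have h : ![(Fin.snoc a v : Fin 4 → U) 0, (Fin.snoc a v : Fin 4 → U) 1,
        (Fin.snoc a v : Fin 4 → U) 2] = a := by
      ext i; fin_cases i <;> rfl
    have h3 : (Fin.snoc a v : Fin 4 → U) 3 = v := rfl
    rw [h, h3]
  have h0 : D 0 = 0 := by
    have := hadd 0 0
    rw [add_zero] at this
    exact left_eq_add.mp this
  simp only [hL]
  rw [col_sum D hadd hleib]
  simp only [Function.iterate_succ_apply', Function.iterate_zero_apply, hadd, h0,
    D_gW3 D hadd hleib, D_gW4 D hadd hleib, Nat.reduceAdd,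
    gW3_eq12, gW3_eq23, gW4_eq12, gW4_eq23, gW4_eq34]
  ring
end

section
/- Let U be a commutative ring of characteristic 3 with a derivation ∂. Then the Wronskian V^{0,1,2,3}(u₁,…,u₄) = det(∂ⁱuⱼ)_{0≤i≤3} makes U a 4-Lie algebra: V^{0,1,2,3} is alternating and satisfies V(a₁,a₂,a₃, V(b₁,b₂,b₃,b₄)) = Σ_{i=1}^4 V(b₁,…,b_{i−1}, V(a₁,a₂,a₃,bᵢ), b_{i+1},…,b₄) for all a's and b's in U. -/
/-- The Wronskian `V^{0,1,2,3}(u₁,…,u₄) = det(D^{i-1} u_j)`. -/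
def V0123 {U : Type*} [CommRing U] (D : U → U) (u : Fin 4 → U) : U :=
  (Matrix.of fun r s : Fin 4 => D^[(r : ℕ)] (u s)).det

/-- Explicit 4×4 determinant with columns indexed `1..4`. -/
lemma V0123_expand {U : Type*} [CommRing U] (D : U → U) (u : Fin 4 → U) :
    V0123 D u =
      u 0 * (D (u 1) * (D (D (u 2)) * D (D (D (u 3))) - D (D (u 3)) * D (D (D (u 2))))
        - D (u 2) * (D (D (u 1)) * D (D (D (u 3))) - D (D (u 3)) * D (D (D (u 1))))
        + D (u 3) * (D (D (u 1)) * D (D (D (u 2))) - D (D (u 2)) * D (D (D (u 1)))))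
      - u 1 * (D (u 0) * (D (D (u 2)) * D (D (D (u 3))) - D (D (u 3)) * D (D (D (u 2))))
        - D (u 2) * (D (D (u 0)) * D (D (D (u 3))) - D (D (u 3)) * D (D (D (u 0))))
        + D (u 3) * (D (D (u 0)) * D (D (D (u 2))) - D (D (u 2)) * D (D (D (u 0)))))
      + u 2 * (D (u 0) * (D (D (u 1)) * D (D (D (u 3))) - D (D (u 3)) * D (D (D (u 1))))
        - D (u 1) * (D (D (u 0)) * D (D (D (u 3))) - D (D (u 3)) * D (D (D (u 0))))
        + D (u 3) * (D (D (u 0)) * D (D (D (u 1))) - D (D (u 1)) * D (D (D (u 0)))))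
      - u 3 * (D (u 0) * (D (D (u 1)) * D (D (D (u 2))) - D (D (u 2)) * D (D (D (u 1))))
        - D (u 1) * (D (D (u 0)) * D (D (D (u 2))) - D (D (u 2)) * D (D (D (u 0))))
        + D (u 2) * (D (D (u 0)) * D (D (D (u 1))) - D (D (u 1)) * D (D (D (u 0))))) := by
  simp [V0123, Matrix.det_succ_row_zero, Fin.sum_univ_succ, Fin.succAbove]
  ring

/-- Left multiplications are differential operators `c₀ + c₁ D - (D c) D² + c D³`. -/
lemma V0123_left {U : Type*} [CommRing U] (D : U → U)
    (hadd : ∀ a b : U, D (a + b) = D a + D b)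
    (hleib : ∀ a b : U, D (a * b) = D a * b + a * D b) (a : Fin 3 → U) :
    ∃ c0 c1 c : U, ∀ x, V0123 D (Fin.snoc a x) =
      c0 * x + c1 * D x - D c * D (D x) + c * D (D (D x)) := by
  have h0 : D 0 = 0 := by simpa using hadd 0 0
  have hneg : ∀ x, D (-x) = - D x := fun x => by
    have := hadd x (-x)
    rw [add_neg_cancel, h0] at this
    linear_combination -this
  have hsub : ∀ x y, D (x - y) = D x - D y := fun x y => by
    rw [sub_eq_add_neg, hadd, hneg, ← sub_eq_add_neg]
  generalize hp : a 0 = p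
  generalize hq : a 1 = q
  generalize hr : a 2 = r
  refine ⟨-(D p * (D (D q) * D (D (D r)) - D (D r) * D (D (D q)))
      - D q * (D (D p) * D (D (D r)) - D (D r) * D (D (D p)))
      + D r * (D (D p) * D (D (D q)) - D (D q) * D (D (D p)))),
    p * (D (D q) * D (D (D r)) - D (D r) * D (D (D q)))
      - q * (D (D p) * D (D (D r)) - D (D r) * D (D (D p)))
      + r * (D (D p) * D (D (D q)) - D (D q) * D (D (D p))),
    p * (D q * D (D r) - D r * D (D q))
      - q * (D p * D (D r) - D r * D (D p))
      + r * (D p * D (D q) - D q * D (D p)), fun x => ?_⟩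
  have e0 : (Fin.snoc a x : Fin 4 → U) 0 = p := by rw [← hp]; rfl
  have e1 : (Fin.snoc a x : Fin 4 → U) 1 = q := by rw [← hq]; rfl
  have e2 : (Fin.snoc a x : Fin 4 → U) 2 = r := by rw [← hr]; rfl
  have e3 : (Fin.snoc a x : Fin 4 → U) 3 = x := rfl
  rw [V0123_expand, e0, e1, e2, e3]
  simp only [hadd, hsub, hleib]
  ring

set_option maxHeartbeats 4000000 in
theorem stmt_10 (U : Type*) [CommRing U] (h3 : (3 : U) = 0) (D : U → U)
    (hadd : ∀ a b : U, D (a + b) = D a + D b)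
    (hleib : ∀ a b : U, D (a * b) = D a * b + a * D b) :
    (∀ (u : Fin 4 → U) (i j : Fin 4), i ≠ j → u i = u j → V0123 D u = 0) ∧
    (∀ (a : Fin 3 → U) (b : Fin 4 → U),
      V0123 D (Fin.snoc a (V0123 D b)) =
        ∑ i : Fin 4, V0123 D (Function.update b i (V0123 D (Fin.snoc a (b i))))) := by
  refine ⟨fun u i j hij h => ?_, fun a b => ?_⟩
  · unfold V0123
    exact Matrix.det_zero_of_column_eq hij (fun r => by simp [h])
  have h0 : D 0 = 0 := by simpa using hadd 0 0
  have hneg : ∀ x, D (-x) = - D x := fun x => by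
    have := hadd x (-x)
    rw [add_neg_cancel, h0] at this
    linear_combination -this
  have hsub : ∀ x y, D (x - y) = D x - D y := fun x y => by
    rw [sub_eq_add_neg, hadd, hneg, ← sub_eq_add_neg]
  obtain ⟨c0, c1, c, hL⟩ := V0123_left D hadd hleib a
  simp only [hL]
  obtain ⟨E, hE⟩ : ∃ E : U → U, ∀ x, D (D (D x)) = E x := ⟨_, fun _ => rfl⟩
  have hEadd : ∀ x y, E (x + y) = E x + E y := fun x y => by simp only [← hE, hadd]
  have hEsub : ∀ x y, E (x - y) = E x - E y := fun x y => by simp only [← hE, hsub]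
  have hEmul : ∀ x y, E (x * y) = E x * y + x * E y := fun x y => by
    simp only [← hE, hadd, hleib]
    linear_combination (D (D x) * D y + D x * D (D y)) * h3
  have hED : ∀ x, E (D x) = D (E x) := fun x => by simp only [← hE]
  simp only [V0123_expand, Fin.sum_univ_four]
  simp only [Function.update_self, ne_eq, Fin.reduceEq, not_false_eq_true,
    Function.update_of_ne, hE]
  generalize b 0 = p
  generalize b 1 = q
  generalize b 2 = r
  generalize b 3 = s
  simp only [hadd, hsub, hleib, hEadd, hEsub, hEmul, hED, hE]
  linear_combination (-(c0 + D c1) * (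
      p * (D q * (D (D r) * E s - D (D s) * E r) - D r * (D (D q) * E s - D (D s) * E q)
        + D s * (D (D q) * E r - D (D r) * E q))
      - q * (D p * (D (D r) * E s - D (D s) * E r) - D r * (D (D p) * E s - D (D s) * E p)
        + D s * (D (D p) * E r - D (D r) * E p))
      + r * (D p * (D (D q) * E s - D (D s) * E q) - D q * (D (D p) * E s - D (D s) * E p)
        + D s * (D (D p) * E q - D (D q) * E p))
      - s * (D p * (D (D q) * E r - D (D r) * E q) - D q * (D (D p) * E r - D (D r) * E p)
        + D r * (D (D p) * E q - D (D q) * E p)))) * h3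
end

section
/- Let U be a commutative ring of characteristic 2 with derivation ∂. Then the Wronskian V^{0,1,2,3,4}(u₁,…,u₅) = det(∂ⁱuⱼ)_{0≤i≤4} is a 5-Lie multiplication: it is alternating and satisfies the Filippov identity V(a₁,…,a₄, V(b₁,…,b₅)) = Σ_{i=1}^5 V(b₁,…,b_{i−1}, V(a₁,…,a₄,bᵢ), b_{i+1},…,b₅). -/
/-- The Wronskian `V^{0,1,2,3,4}(u₁,…,u₅) = det(D^{i-1} u_j)`. -/
def V01234 {U : Type*} [CommRing U] (D : U → U) (u : Fin 5 → U) : U :=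
  (Matrix.of fun r s : Fin 5 => D^[(r : ℕ)] (u s)).det

/-- Generalized Wronskian with rows of derivative orders `f`. -/
def WW {U : Type*} [CommRing U] {n : ℕ} (D : U → U) (b : Fin n → U) (f : Fin n → ℕ) : U :=
  (Matrix.of fun r s : Fin n => D^[f r] (b s)).det

theorem WW_expand {U : Type*} [CommRing U] {n : ℕ} (D : U → U) (b : Fin n → U) (f : Fin n → ℕ) :
    WW D b f = ∑ σ : Equiv.Perm (Fin n), ((Equiv.Perm.sign σ : ℤ) : U) * ∏ i, D^[f i] (b (σ i)) := by
  unfold WW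
  rw [← Matrix.det_transpose, Matrix.det_apply']
  rfl

theorem D_sum {U : Type*} [CommRing U] (D : U → U)
    (hadd : ∀ a b : U, D (a + b) = D a + D b) {ι : Type*} (s : Finset ι) (g : ι → U) :
    D (∑ i ∈ s, g i) = ∑ i ∈ s, D (g i) :=
  map_sum (AddMonoidHom.mk' D hadd) g s

theorem D_zsmul {U : Type*} [CommRing U] (D : U → U)
    (hadd : ∀ a b : U, D (a + b) = D a + D b) (z : ℤ) (x : U) :
    D ((z : U) * x) = (z : U) * D x := by
  have := map_zsmul (AddMonoidHom.mk' D hadd) z x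
  simpa [zsmul_eq_mul] using this

theorem D_WW5 {U : Type*} [CommRing U] (D : U → U)
    (hadd : ∀ a b : U, D (a + b) = D a + D b)
    (hleib : ∀ a b : U, D (a * b) = D a * b + a * D b) (b : Fin 5 → U) (f : Fin 5 → ℕ) :
    D (WW D b f) = ∑ k, WW D b (Function.update f k (f k + 1)) := by
  simp only [WW_expand, D_sum D hadd, D_zsmul D hadd]
  rw [Finset.sum_comm]
  refine Finset.sum_congr rfl fun σ _ => ?_
  rw [← Finset.mul_sum]
  congr 1
  simp [Fin.sum_univ_five, Fin.prod_univ_five, hleib, Function.update_apply,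
    Function.iterate_succ_apply']
  ring

theorem D_WW4 {U : Type*} [CommRing U] (D : U → U)
    (hadd : ∀ a b : U, D (a + b) = D a + D b)
    (hleib : ∀ a b : U, D (a * b) = D a * b + a * D b) (b : Fin 4 → U) (f : Fin 4 → ℕ) :
    D (WW D b f) = ∑ k, WW D b (Function.update f k (f k + 1)) := by
  simp only [WW_expand, D_sum D hadd, D_zsmul D hadd]
  rw [Finset.sum_comm]
  refine Finset.sum_congr rfl fun σ _ => ?_
  rw [← Finset.mul_sum]
  congr 1
  simp [Fin.sum_univ_four, Fin.prod_univ_four, hleib, Function.update_apply,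
    Function.iterate_succ_apply']
  ring

theorem WW_zero {U : Type*} [CommRing U] {n : ℕ} (D : U → U) (b : Fin n → U) (f : Fin n → ℕ)
    (i j : Fin n) (hij : i ≠ j) (h : f i = f j) : WW D b f = 0 := by
  apply Matrix.det_zero_of_row_eq hij
  ext s
  simp [h]

theorem WW_swap {U : Type*} [CommRing U] (h2 : (2 : U) = 0) {n : ℕ} (D : U → U) (b : Fin n → U)
    (f : Fin n → ℕ) (i j : Fin n) (hij : i ≠ j) : WW D b (f ∘ Equiv.swap i j) = WW D b f := by
  have := Matrix.det_permute (Equiv.swap i j) (Matrix.of fun r s : Fin n => D^[f r] (b s))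
  rw [Equiv.Perm.sign_swap hij] at this
  have h3 : WW D b (f ∘ Equiv.swap i j) = - WW D b f := by
    unfold WW
    rw [Units.val_neg, Units.val_one, Int.cast_neg, Int.cast_one, neg_one_mul] at this
    exact this
  linear_combination h3 - h2 * WW D b f

theorem trace_swap {U : Type*} [CommRing U] {n : ℕ} (B M : Matrix (Fin n) (Fin n) U) :
    ∑ i, (B.updateCol i (fun r => M r i)).det = ∑ r, (B.updateRow r (M r)).det := by
  simp only [← Matrix.cramer_apply, ← Matrix.cramer_transpose_apply, Matrix.cramer_eq_adjugate_mulVec,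
    Matrix.mulVec, dotProduct]
  rw [Finset.sum_comm]
  refine Finset.sum_congr rfl fun r _ => Finset.sum_congr rfl fun s _ => ?_
  rw [← Matrix.adjugate_transpose]
  rfl

theorem V_snoc {U : Type*} [CommRing U] (h2 : (2 : U) = 0) (D : U → U)
    (hadd : ∀ a b : U, D (a + b) = D a + D b)
    (hleib : ∀ a b : U, D (a * b) = D a * b + a * D b) (a : Fin 4 → U) :
    ∃ A0 A1 A2 A4 : U, ∀ x, V01234 D (Fin.snoc a x) =
      A0 * x + A1 * D x + A2 * D (D x) + D A4 * D (D (D x)) + A4 * D (D (D (D x))) := by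
  refine ⟨WW D a ![1,2,3,4], WW D a ![0,2,3,4], WW D a ![0,1,3,4], WW D a ![0,1,2,3], fun x => ?_⟩
  have hD : D (WW D a ![0,1,2,3]) = WW D a ![0,1,2,4] := by
    rw [D_WW4 D hadd hleib, Fin.sum_univ_four]
    rw [WW_zero D a _ 0 1 (by decide) (by decide), WW_zero D a _ 1 2 (by decide) (by decide),
      WW_zero D a _ 2 3 (by decide) (by decide)]
    simp only [zero_add]
    congr 1
    decide
  rw [hD]
  have key : ∀ (k : Fin 5) (f : Fin 4 → ℕ), (∀ i, f i = ((k.succAbove i : Fin 5) : ℕ)) →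
     ((Matrix.of fun r s : Fin 5 => D^[(r : ℕ)] ((Fin.snoc a x : Fin 5 → U) s)).submatrix k.succAbove
      (Fin.last 4).succAbove).det = WW D a f := by
    intro k f hf
    unfold WW
    congr 1
    ext r s
    simp [hf]
    congr 1
    have h4 : Fin.succAbove 4 s = s.castSucc := Fin.succAbove_last_apply s
    rw [h4]
    exact Fin.snoc_castSucc (α := fun _ => U) x a s
  unfold V01234
  rw [Matrix.det_succ_column _ (Fin.last 4), Fin.sum_univ_five,
    key 0 ![1,2,3,4] (by decide), key 1 ![0,2,3,4] (by decide), key 2 ![0,1,3,4] (by decide),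
    key 3 ![0,1,2,4] (by decide), key 4 ![0,1,2,3] (by decide)]
  have hl : (Fin.snoc a x : Fin 5 → U) 4 = x := Fin.snoc_last (α := fun _ => U) x a
  have hl4 : (Fin.last 4 : Fin 5) = 4 := rfl
  simp only [Matrix.of_apply, hl4, hl]
  simp
  linear_combination - h2 * (WW D a ![0,2,3,4] * D x + WW D a ![0,1,2,4] * D (D (D x)))

theorem stmt_12 (U : Type*) [CommRing U] (h2 : (2 : U) = 0) (D : U → U)
    (hadd : ∀ a b : U, D (a + b) = D a + D b)
    (hleib : ∀ a b : U, D (a * b) = D a * b + a * D b) :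
    (∀ (u : Fin 5 → U) (i j : Fin 5), i ≠ j → u i = u j → V01234 D u = 0) ∧
    (∀ (a : Fin 4 → U) (b : Fin 5 → U),
      V01234 D (Fin.snoc a (V01234 D b)) =
        ∑ i : Fin 5, V01234 D (Function.update b i (V01234 D (Fin.snoc a (b i))))) := by
  refine ⟨fun u i j hij h => Matrix.det_zero_of_column_eq hij (fun r => by simp [h]),
    fun a b => ?_⟩
  obtain ⟨A0, A1, A2, A4, hA⟩ := V_snoc h2 D hadd hleib a
  simp only [hA]
  set L : U → U := fun x => A0 * x + A1 * D x + A2 * D (D x) + D A4 * D (D (D x)) +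
    A4 * D (D (D (D x))) with hL
  set B : Matrix (Fin 5) (Fin 5) U := Matrix.of fun r s : Fin 5 => D^[(r : ℕ)] (b s) with hB
  have hR : ∑ i : Fin 5, V01234 D (Function.update b i (L (b i))) =
      ∑ r : Fin 5, (B.updateRow r (fun s => D^[(r : ℕ)] (L (b s)))).det := by
    refine Eq.trans ?_ (trace_swap B (Matrix.of fun r s => D^[(r : ℕ)] (L (b s))))
    refine Finset.sum_congr rfl fun i _ => ?_
    unfold V01234
    congr 1
    ext r s
    by_cases h : s = i
    · subst h; simp
    · simp [h, hB]
  have hV : V01234 D b = WW D b ![0,1,2,3,4] := by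
    unfold V01234 WW
    congr 1
    ext r s
    fin_cases r <;> rfl
  -- row replacement
  have hrow : ∀ (r : Fin 5) (c : Fin 9 → U) (g : Fin 5 → U),
      (∀ s, g s = ∑ m : Fin 9, c m * D^[(m : ℕ)] (b s)) →
      (B.updateRow r g).det =
        ∑ m : Fin 9, c m * WW D b (Function.update ![0,1,2,3,4] r (m : ℕ)) := by
    intro r c g hg
    have e : ∀ v, (B.updateRow r v).det = Matrix.cramer B.transpose v r := fun v =>
      (Matrix.cramer_transpose_apply B v r).symm
    have hg' : g = ∑ m : Fin 9, c m • (fun s => D^[(m : ℕ)] (b s)) := by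
      ext s; simp [hg, Finset.sum_apply]
    rw [e, hg', map_sum, Finset.sum_apply]
    refine Finset.sum_congr rfl fun m _ => ?_
    rw [map_smul, Pi.smul_apply, ← e, smul_eq_mul]
    congr 1
    unfold WW
    congr 1
    ext i s
    by_cases h : i = r
    · subst h; simp
    · simp [h, hB]
      fin_cases i <;> rfl
  have hr := fun (r : Fin 5) (c : Fin 9 → U) h => hrow r c (fun s => D^[(r : ℕ)] (L (b s))) h
  have r0 := hr 0 ![A0, A1, A2, D A4, A4, 0, 0, 0, 0] (by
    intro s; simp [Fin.sum_univ_succ, hL]; ring)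
  have r1 := hr 1 ![D A0, D A1 + A0, D A2 + A1, D (D A4) + A2, D A4 + D A4, A4, 0, 0, 0] (by
    intro s; simp [Fin.sum_univ_succ, hL, hadd, hleib]; ring)
  have r2 := hr 2 ![D (D A0), D (D A1) + 2 * D A0, D (D A2) + 2 * D A1 + A0,
      D (D (D A4)) + 2 * D A2 + A1, D (D A4) + 2 * D (D A4) + A2, 2 * D A4 + D A4, A4, 0, 0] (by
    intro s; simp [Fin.sum_univ_succ, hL, hadd, hleib]; ring)
  have r3 := hr 3 ![D (D (D A0)), D (D (D A1)) + 3 * D (D A0),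
      D (D (D A2)) + 3 * D (D A1) + 3 * D A0,
      D (D (D (D A4))) + 3 * D (D A2) + 3 * D A1 + A0,
      D (D (D A4)) + 3 * D (D (D A4)) + 3 * D A2 + A1,
      3 * D (D A4) + 3 * D (D A4) + A2, 3 * D A4 + D A4, A4, 0] (by
    intro s; simp [Fin.sum_univ_succ, hL, hadd, hleib]; ring)
  have r4 := hr 4 ![D (D (D (D A0))), D (D (D (D A1))) + 4 * D (D (D A0)),
      D (D (D (D A2))) + 4 * D (D (D A1)) + 6 * D (D A0),
      D (D (D (D (D A4)))) + 4 * D (D (D A2)) + 6 * D (D A1) + 4 * D A0,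
      D (D (D (D A4))) + 4 * D (D (D (D A4))) + 6 * D (D A2) + 4 * D A1 + A0,
      4 * D (D (D A4)) + 6 * D (D (D A4)) + 4 * D A2 + A1,
      6 * D (D A4) + 4 * D (D A4) + A2, 4 * D A4 + D A4, A4] (by
    intro s; simp [Fin.sum_univ_succ, hL, hadd, hleib]; ring)
  -- the generalized Wronskians, with explicit indices
  obtain ⟨F, hF⟩ : ∃ F : ℕ → ℕ → ℕ → ℕ → ℕ → U, ∀ i j k l m, WW D b ![i, j, k, l, m] = F i j k l m :=
    ⟨_, fun _ _ _ _ _ => rfl⟩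
  have hFf : ∀ f : Fin 5 → ℕ, WW D b f = F (f 0) (f 1) (f 2) (f 3) (f 4) := by
    intro f
    rw [← hF]
    congr 1
    ext i
    fin_cases i <;> rfl
  have hz : ∀ (f : Fin 5 → ℕ) (i j : Fin 5), i ≠ j → f i = f j →
      F (f 0) (f 1) (f 2) (f 3) (f 4) = 0 := by
    intro f i j hij h
    rw [← hFf]
    exact WW_zero D b f i j hij h
  have z01 : ∀ i k l m, F i i k l m = 0 := fun i k l m => hz ![i, i, k, l, m] 0 1 (by decide) rfl
  have z02 : ∀ i k l m, F i k i l m = 0 := fun i k l m => hz ![i, k, i, l, m] 0 2 (by decide) rfl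
  have z03 : ∀ i k l m, F i k l i m = 0 := fun i k l m => hz ![i, k, l, i, m] 0 3 (by decide) rfl
  have z04 : ∀ i k l m, F i k l m i = 0 := fun i k l m => hz ![i, k, l, m, i] 0 4 (by decide) rfl
  have z12 : ∀ i k l m, F k i i l m = 0 := fun i k l m => hz ![k, i, i, l, m] 1 2 (by decide) rfl
  have z13 : ∀ i k l m, F k i l i m = 0 := fun i k l m => hz ![k, i, l, i, m] 1 3 (by decide) rfl
  have z14 : ∀ i k l m, F k i l m i = 0 := fun i k l m => hz ![k, i, l, m, i] 1 4 (by decide) rfl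
  have z23 : ∀ i k l m, F k l i i m = 0 := fun i k l m => hz ![k, l, i, i, m] 2 3 (by decide) rfl
  have z24 : ∀ i k l m, F k l i m i = 0 := fun i k l m => hz ![k, l, i, m, i] 2 4 (by decide) rfl
  have z34 : ∀ i k l m, F k l m i i = 0 := fun i k l m => hz ![k, l, m, i, i] 3 4 (by decide) rfl
  have s12 : ∀ i j k l m, F i j k l m = F i k j l m := by
    intro i j k l m
    have := WW_swap h2 D b ![i, k, j, l, m] 1 2 (by decide)
    rw [hFf, hFf] at this
    exact this
  have s23 : ∀ i j k l m, F i j k l m = F i j l k m := by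
    intro i j k l m
    have := WW_swap h2 D b ![i, j, l, k, m] 2 3 (by decide)
    rw [hFf, hFf] at this
    exact this
  have s34 : ∀ i j k l m, F i j k l m = F i j k m l := by
    intro i j k l m
    have := WW_swap h2 D b ![i, j, k, m, l] 3 4 (by decide)
    rw [hFf, hFf] at this
    exact this
  have hDF : ∀ i j k l m, D (F i j k l m) = F (i+1) j k l m + F i (j+1) k l m + F i j (k+1) l m
      + F i j k (l+1) m + F i j k l (m+1) := by
    intro i j k l m
    rw [← hF, D_WW5 D hadd hleib, Fin.sum_univ_five]
    simp only [hFf]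
    rfl
  have e3 (m : ℕ) : F 0 1 2 m 4 = F 0 1 2 4 m := s34 _ _ _ _ _
  have e2 (m : ℕ) : F 0 1 m 3 4 = F 0 1 3 4 m := by rw [s23, s34]
  have e1 (m : ℕ) : F 0 m 2 3 4 = F 0 2 3 4 m := by rw [s12, s23, s34]
  have d1 : D (F 0 1 2 3 4) = F 0 1 2 3 5 := by
    rw [hDF]; simp [z01, z12, z23, z34]
  have d2 : D (F 0 1 2 3 5) = F 0 1 2 4 5 + F 0 1 2 3 6 := by
    rw [hDF]; simp [z01, z12, z23, z34]
  have d3 : D (F 0 1 2 4 5 + F 0 1 2 3 6) = F 0 1 3 4 5 + F 0 1 2 3 7 := by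
    rw [hadd, hDF, hDF]; simp [z01, z12, z23, z34]
    linear_combination h2 * F 0 1 2 4 6
  have d4 : D (F 0 1 3 4 5 + F 0 1 2 3 7) =
      F 0 2 3 4 5 + F 0 1 3 4 6 + F 0 1 2 4 7 + F 0 1 2 3 8 := by
    rw [hadd, hDF, hDF]; simp [z01, z12, z23, z34]
    ring
  simp only [hFf, Fin.sum_univ_succ] at r0 r1 r2 r3 r4
  simp [Function.update_apply, z01, z02, z03, z04, z12, z13, z14, z23, z24, z34] at r0 r1 r2 r3 r4
  rw [e1 5] at r1
  rw [e2 5, e2 6] at r2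
  rw [e3 5, e3 6, e3 7] at r3
  have hsum : ∑ r : Fin 5, (B.updateRow r (fun s => D^[(r : ℕ)] (L (b s)))).det =
      (B.updateRow 0 fun s => L (b s)).det + (B.updateRow 1 fun s => D (L (b s))).det +
      (B.updateRow 2 fun s => D (D (L (b s)))).det +
      (B.updateRow 3 fun s => D (D (D (L (b s))))).det +
      (B.updateRow 4 fun s => D (D (D (D (L (b s)))))).det := by
    rw [Fin.sum_univ_five]
    rfl
  refine Eq.trans ?_ hR.symm
  rw [hsum, r0, r1, r2, r3, r4, hV, hF, d1, d2, d3, d4]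
  linear_combination - h2 * ((2 * A0 + 5 * D A1 + 5 * D (D A2) + 3 * D (D (D (D A4)))) * F 0 1 2 3 4
    + (5 * D (D (D A4)) + 2 * D A2) * F 0 1 2 3 5 + 5 * D (D A4) * F 0 1 2 3 6
    + 2 * D A4 * F 0 1 2 3 7 + 3 * D (D A4) * F 0 1 2 4 5 + 2 * D A4 * F 0 1 2 4 6
    + D A4 * F 0 1 3 4 5)
end
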